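/- For all q > 0, ε > 0 and α > 1: lim_{s→0⁺} Σ_{k=1}^∞ exp(−q·s^{−ε·α^k}) = 0, where the limit is taken as s tends to 0 from within the interval (0, 1) and s^{−ε·α^k} denotes (1/s)^{ε·α^k}; in particular, for every s ∈ (0, 1) the series Σ_{k=1}^∞ exp(−q·s^{−ε·α^k}) converges. -/

import Mathlib

open Filter

/-!
With `x = 1 / s` the terms are `exp (-q x ^ aₖ)`, where the exponents `aₖ = ε α ^ (k + 1)` grow at
least linearly by Bernoulli's inequality. Since `x ^ a ≥ a log x`, each series with `x > 1` is
dominated by a geometric one. Each term decreases to `0` as `x → ∞`, so the series at one fixed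
base `x₀ > 1` dominates all later ones and the limit may be taken termwise.
-/

open Topology

theorem summable_exp_mul_pow_of_neg {c α : ℝ} (hc : c < 0) (hα : 1 < α) :
    Summable fun k : ℕ => Real.exp (c * α ^ k) := by
  have hα' : 0 < α - 1 := sub_pos.2 hα
  have linear_le_pow (k : ℕ) : (k : ℝ) ≤ α ^ k / (α - 1) := by
    rw [le_div_iff₀ hα']
    linarith [one_add_mul_sub_le_pow (a := α) (by linarith) k]
  refine (Real.summable_exp_nat_mul_of_ge (mul_neg_of_neg_of_pos hc hα') linear_le_pow).congr
    fun k => ?_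
  field_simp

theorem mul_log_le_rpow {x : ℝ} (hx : 0 < x) (a : ℝ) : a * Real.log x ≤ x ^ a := by
  rw [Real.rpow_def_of_pos hx, mul_comm]
  linarith [Real.add_one_le_exp (Real.log x * a)]

section RpowSeries

variable {ι : Type*} {a : ι → ℝ} {q x₀ : ℝ}

theorem summable_exp_neg_mul_rpow (hq : 0 ≤ q) (hx₀ : 0 < x₀)
    (ha : Summable fun i => Real.exp (-(q * Real.log x₀) * a i)) :
    Summable fun i => Real.exp (-q * x₀ ^ a i) := by
  refine ha.of_nonneg_of_le (fun _ => (Real.exp_pos _).le) fun i => Real.exp_le_exp.2 ?_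
  calc -q * x₀ ^ a i ≤ -q * (a i * Real.log x₀) :=
        mul_le_mul_of_nonpos_left (mul_log_le_rpow hx₀ _) (neg_nonpos.2 hq)
    _ = -(q * Real.log x₀) * a i := by ring

theorem tendsto_exp_neg_mul_rpow_atTop {b : ℝ} (hq : 0 < q) (hb : 0 < b) :
    Tendsto (fun x : ℝ => Real.exp (-q * x ^ b)) atTop (𝓝 0) :=
  Real.tendsto_exp_atBot.comp
    ((tendsto_rpow_atTop hb).const_mul_atTop_of_neg (neg_neg_of_pos hq))

theorem exp_neg_mul_rpow_le_exp_neg_mul_rpow {x b : ℝ} (hq : 0 ≤ q) (hx₀ : 0 ≤ x₀) (hx : x₀ ≤ x)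
    (hb : 0 ≤ b) : Real.exp (-q * x ^ b) ≤ Real.exp (-q * x₀ ^ b) :=
  Real.exp_le_exp.2 <|
    mul_le_mul_of_nonpos_left (Real.rpow_le_rpow hx₀ hx hb) (neg_nonpos.2 hq)

theorem tendsto_tsum_exp_neg_mul_rpow_atTop (hq : 0 < q) (hx₀ : 0 ≤ x₀) (ha : ∀ i, 0 < a i)
    (hsum : Summable fun i => Real.exp (-q * x₀ ^ a i)) :
    Tendsto (fun x : ℝ => ∑' i, Real.exp (-q * x ^ a i)) atTop (𝓝 0) := by
  have dominated : ∀ᶠ x : ℝ in atTop, ∀ i,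
      ‖Real.exp (-q * x ^ a i)‖ ≤ Real.exp (-q * x₀ ^ a i) := by
    filter_upwards [eventually_ge_atTop x₀] with x hx i
    rw [Real.norm_of_nonneg (Real.exp_pos _).le]
    exact exp_neg_mul_rpow_le_exp_neg_mul_rpow hq.le hx₀ hx (ha i).le
  simpa only [tsum_zero] using tendsto_tsum_of_dominated_convergence hsum
    (fun i => tendsto_exp_neg_mul_rpow_atTop hq (ha i)) dominated

end RpowSeries

theorem summable_exp_neg_mul_rpow_mul_pow_succ {q ε α x : ℝ} (hq : 0 < q) (hε : 0 < ε)
    (hα : 1 < α) (hx : 1 < x) :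
    Summable fun k : ℕ => Real.exp (-q * x ^ (ε * α ^ (k + 1))) := by
  have hlog : 0 < Real.log x := Real.log_pos hx
  have hc : -(q * Real.log x) * ε < 0 := by
    rw [neg_mul, neg_lt_zero]
    positivity
  refine summable_exp_neg_mul_rpow hq.le (zero_lt_one.trans hx) ?_
  simpa only [mul_assoc] using (summable_nat_add_iff 1).2 (summable_exp_mul_pow_of_neg hc hα)

/-- **Vanishing error sum** (Lemma A.3): for `q, ε > 0` and `α > 1`,
`lim_{s → 0⁺} Σ_{k ≥ 1} exp(-q s^{-ε α^k}) = 0`, where `s` stays in `(0,1)` and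
`s^{-ε α^k} = (1/s)^{ε α^k}`; in particular the series converges for every
`s ∈ (0,1)`. -/
theorem vanishing_error_sum (q ε α : ℝ) (hq : 0 < q) (hε : 0 < ε) (hα : 1 < α) :
    Filter.Tendsto
        (fun s : ℝ => ∑' k : ℕ,
          Real.exp (-q * (1 / s) ^ (ε * α ^ (k + 1))))
        (nhdsWithin 0 (Set.Ioo 0 1)) (nhds 0) ∧
      ∀ s ∈ Set.Ioo (0 : ℝ) 1,
        Summable (fun k : ℕ => Real.exp (-q * (1 / s) ^ (ε * α ^ (k + 1)))) := by
  have summable_of_one_lt {x : ℝ} (hx : 1 < x) :=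
    summable_exp_neg_mul_rpow_mul_pow_succ hq hε hα hx
  refine ⟨?_, fun s hs => summable_of_one_lt (one_lt_one_div hs.1 hs.2)⟩
  have exponent_pos (k : ℕ) : 0 < ε * α ^ (k + 1) :=
    mul_pos hε (pow_pos (zero_lt_one.trans hα) _)
  have one_div_tendsto : Tendsto (fun s : ℝ => 1 / s) (𝓝[Set.Ioo 0 1] 0) atTop := by
    simpa only [one_div] using
      tendsto_inv_nhdsGT_zero.mono_left (nhdsWithin_mono 0 Set.Ioo_subset_Ioi_self)
  exact (tendsto_tsum_exp_neg_mul_rpow_atTop hq zero_le_two exponent_pos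
    (summable_of_one_lt one_lt_two)).comp one_div_tendsto
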